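/- Let b ≥ 2 be an integer and s = s₁s₂… a Sturmian or quasi-Sturmian word over {0, 1, …, b−1}. Then the irrationality exponent of ξ = Σ_{j≥1} s_j / b^j satisfies μ(ξ) ≥ 5/3 + 4√10/15 (where one also counts ξ being a Liouville number as satisfying this inequality). -/

import Mathlib

/-!
Passing to a suffix, the word `y` may be assumed to be recurrent, with complexity `n + k` for large
`n`. For each length `n`, consider the first repetition `(j, m)`: the least `m` such that the
factors of length `n` at `m` and at some `j < m` coincide. It produces a stretch `y[j, m + n)` of period
`m - j`, hence a rational number `r` whose denominator divides `b ^ m - b ^ j` (up to the shift)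
and with `|ξ - r|` at most `1 / (b ^ n (b ^ m - b ^ j))`; so `μ(ξ) ≥ 1 + n / m` asymptotically.
The best lengths are the `L 0 < L 1 < …` for which the first repeated factor is right special.
There `M (i + 1) = L i + K` for a constant `K` (`FR.eq_pc`), because all factors of length `L i + 1`
are read exactly once before the next first repetition, so it is enough to show that
`limsup L (i + 1) / L i ≥ 2 / 3 + 4 √10 / 15` (`Levels.fast`). That `ξ` is irrational, so that the
approximations are infinite in number, follows from the non-periodicity of the word.

Since there is only one right special factor of each large length, the right special factors are
suffixes of each other (`Levels.suffix`). Recurrence implies that `J` cannot be nonzero at two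
consecutive levels (`Levels.J_eq_zero`), while two consecutive zeros force a large quotient
(`Levels.add_M_le`). So if all quotients are small, `J` vanishes at every second level. At such a
level the right special prefix has length `A`, its first return cycle has length `B` and the second
one has length `C`. Following the cycles gives, up to the next such level (`Levels.occ_last`,
`Levels.next_cycle`),
`A₁ = A + B + u C`, `B₁ = B + (u + 1) C`, `C₁ = B + u C`,
with an integer `u ≥ 0`, and the quotients are close to `B₁ / A` and `A / B`, the error coming from
the constant `K`. If they are all below `1.51`, linear arithmetic shows that `u` is eventually
periodic with period `0, 0, 1`, and the monodromy of this period has eigenvalues `1` and `3 ± √10`.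
The sequence of quotients converges in alternation around its limit, since `3 - √10` is negative,
which prevents the quotients from staying below the limit value (`Rec.impossible`).
-/

open Filter

/-- `rc n x` : length of the shortest prefix of the infinite word `x` containing two
(possibly overlapping) occurrences of some word of length `n`.  Here `x k` is the
`(k+1)`-st letter of the word. -/
noncomputable def rc {A : Type*} (n : ℕ) (x : ℕ → A) : ℕ :=
  sInf {m | ∃ j, j + n < m ∧ ∀ t < n, x (j + t) = x (m - n + t)}

/-- subword complexity: the number of distinct factors of length `n` of `x` -/
noncomputable def pc {A : Type*} (n : ℕ) (x : ℕ → A) : ℕ :=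
  Set.ncard {w : Fin n → A | ∃ k, ∀ t : Fin n, w t = x (k + t.1)}

def IsSturmian {A : Type*} (x : ℕ → A) : Prop := ∀ n ≥ 1, pc n x = n + 1

def EventuallyPeriodic {A : Type*} (x : ℕ → A) : Prop :=
  ∃ p > 0, ∃ N, ∀ n ≥ N, x (n + p) = x n

/-- exponent of repetition: `liminf r(n,x)/n` -/
noncomputable def repExp {A : Type*} (x : ℕ → A) : EReal :=
  Filter.atTop.liminf fun n => (((rc n x : ℝ) / (n : ℝ) : ℝ) : EReal)

/-- the irrationality exponent of a real number `ξ`, as an extended real: the supremum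
of the real numbers `μ` such that `|ξ - p/q| < 1/q^μ` has infinitely many rational
solutions `p/q`.  A real number `ξ` is a Liouville number when `irrExp ξ = ⊤`. -/
noncomputable def irrExp (ξ : ℝ) : EReal :=
  sSup ((fun m : ℝ => (m : EReal)) ''
    {m : ℝ | {q : ℚ | |ξ - (q : ℝ)| < 1 / (q.den : ℝ) ^ m}.Infinite})

def IsQuasiSturmian {A : Type*} (x : ℕ → A) : Prop :=
  ∃ k : ℕ, 0 < k ∧ ∃ n₀ : ℕ, ∀ n ≥ n₀, pc n x = n + k

/-! ### Factors, collisions and Morse–Hedlund -/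

/-- `E y n p q`: the factors of length `n` of `y` at the positions `p` and `q` coincide. -/
def E (y : ℕ → ℕ) (n p q : ℕ) : Prop := ∀ t < n, y (p + t) = y (q + t)

/-- The factor of length `n` of `y` at position `p`. -/
def fac (y : ℕ → ℕ) (n p : ℕ) : Fin n → ℕ := fun t => y (p + t.1)

theorem fac_eq_iff {y : ℕ → ℕ} {n p q : ℕ} : fac y n p = fac y n q ↔ E y n p q := by
  constructor
  · intro h t ht
    exact congrFun h ⟨t, ht⟩
  · intro h
    funext t
    exact h t.1 t.2

theorem pc_eq (y : ℕ → ℕ) (n : ℕ) : pc n y = (Set.range (fac y n)).ncard := by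
  unfold pc
  congr 1
  ext w
  constructor
  · rintro ⟨k, hk⟩
    exact ⟨k, funext fun t => (hk t).symm⟩
  · rintro ⟨k, rfl⟩
    exact ⟨k, fun t => rfl⟩

namespace E

variable {y : ℕ → ℕ} {n m p q r : ℕ}

theorem refl (n p : ℕ) : E y n p p := fun _ _ => rfl

theorem symm (h : E y n p q) : E y n q p := fun t ht => (h t ht).symm

theorem trans (h : E y n p q) (h' : E y n q r) : E y n p r :=
  fun t ht => (h t ht).trans (h' t ht)

theorem mono (h : E y n p q) (hm : m ≤ n) : E y m p q := fun t ht => h t (by omega)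

theorem shift (h : E y n p q) (d : ℕ) (hm : m + d ≤ n) : E y m (p + d) (q + d) := by
  intro t ht
  have := h (d + t) (by omega)
  simpa [add_assoc] using this

theorem succ (h : E y n p q) (h' : y (p + n) = y (q + n)) : E y (n + 1) p q := by
  intro t ht
  rcases Nat.lt_succ_iff_lt_or_eq.mp ht with h1 | rfl
  · exact h t h1
  · exact h'

end E

theorem range_fac_finite {y : ℕ → ℕ} {n c : ℕ} (h : pc n y = c) (hc : 0 < c) :
    (Set.range (fac y n)).Finite := by
  apply Set.finite_of_ncard_pos
  rw [← pc_eq, h]; exact hc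

/-- A surjection between finite sets of cardinalities `N + 1` and `N` identifies exactly one
pair of points. -/
theorem collision_aux {α β : Type*} {S : Set α} {T : Set β} {f : α → β} (hS : S.Finite)
    (hcard : S.ncard = T.ncard + 1) (hf : f '' S = T) {x₁ x₂ x₃ x₄ : α}
    (h1 : x₁ ∈ S) (h2 : x₂ ∈ S) (h3 : x₃ ∈ S) (h4 : x₄ ∈ S) (h12 : x₁ ≠ x₂) (h34 : x₃ ≠ x₄)
    (f12 : f x₁ = f x₂) (f34 : f x₃ = f x₄) :
    (x₁ = x₃ ∧ x₂ = x₄) ∨ (x₁ = x₄ ∧ x₂ = x₃) := by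
  have key : ∀ a b, a ∈ S → b ∈ S → a ≠ b → f a = f b → Set.InjOn f (S \ {a}) := by
    intro a b ha hb hab fab
    have himg : f '' (S \ {a}) = T := by
      rw [← hf]
      apply Set.Subset.antisymm
      · exact Set.image_mono Set.sdiff_subset
      · rintro _ ⟨c, hc, rfl⟩
        by_cases hca : c = a
        · exact ⟨b, ⟨hb, fun h => hab h.symm⟩, by rw [hca, fab]⟩
        · exact ⟨c, ⟨hc, hca⟩, rfl⟩
    apply Set.injOn_of_ncard_image_eq _ (hS.subset Set.sdiff_subset)
    rw [himg, Set.ncard_sdiff_singleton_of_mem ha, hcard]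
    rfl
  have k1 := key x₁ x₂ h1 h2 h12 f12
  have k2 := key x₂ x₁ h2 h1 h12.symm f12.symm
  have e1 : x₃ = x₁ ∨ x₄ = x₁ := by
    by_contra! hc
    exact h34 (k1 ⟨h3, hc.1⟩ ⟨h4, hc.2⟩ f34)
  have e2 : x₃ = x₂ ∨ x₄ = x₂ := by
    by_contra! hc
    exact h34 (k2 ⟨h3, hc.1⟩ ⟨h4, hc.2⟩ f34)
  grind

theorem image_trunc (y : ℕ → ℕ) (n : ℕ) :
    (fun (w : Fin (n + 1) → ℕ) (t : Fin n) => w t.castSucc) '' Set.range (fac y (n + 1))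
      = Set.range (fac y n) := by
  rw [← Set.range_comp]
  rfl

/-- If the complexity increases by one from `n` to `n + 1`, there is only one right special
factor of length `n`, and it has exactly two extensions. -/
theorem collision {y : ℕ → ℕ} {n p q p' q' : ℕ} (hp : pc (n + 1) y = pc n y + 1)
    (h : E y n p q) (hne : y (p + n) ≠ y (q + n))
    (h' : E y n p' q') (hne' : y (p' + n) ≠ y (q' + n)) :
    (E y (n + 1) p p' ∧ E y (n + 1) q q') ∨ (E y (n + 1) p q' ∧ E y (n + 1) q p') := by
  have hfin : (Set.range (fac y (n + 1))).Finite := range_fac_finite hp (by omega)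
  rw [pc_eq, pc_eq] at hp
  have := collision_aux hfin hp (image_trunc y n)
    (Set.mem_range_self p) (Set.mem_range_self q) (Set.mem_range_self p') (Set.mem_range_self q')
    (fun e => hne (fac_eq_iff.mp e n (by omega))) (fun e => hne' (fac_eq_iff.mp e n (by omega)))
    (funext fun t => h t.1 t.2) (funext fun t => h' t.1 t.2)
  simpa only [fac_eq_iff] using this

theorem pc_le_of_rep {y : ℕ → ℕ} {n c : ℕ} (h : ∀ q, ∃ r < c, E y n q r) : pc n y ≤ c := by
  rw [pc_eq]
  have : Set.range (fac y n) ⊆ fac y n '' (Finset.range c : Set ℕ) := by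
    rintro _ ⟨q, rfl⟩
    obtain ⟨r, hr, e⟩ := h q
    exact ⟨r, by simpa using hr, (fac_eq_iff.mpr e).symm⟩
  calc _ ≤ (fac y n '' (Finset.range c : Set ℕ)).ncard :=
        Set.ncard_le_ncard this ((Finset.finite_toSet _).image _)
    _ ≤ (Finset.range c : Set ℕ).ncard := Set.ncard_image_le (Finset.finite_toSet _)
    _ = c := by rw [Set.ncard_coe_finset, Finset.card_range]

theorem pc_eq_of_rep {y : ℕ → ℕ} {n c : ℕ} (h : ∀ q, ∃ r < c, E y n q r)
    (hd : ∀ p q, p < q → q < c → ¬ E y n p q) : pc n y = c := by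
  rw [pc_eq]
  have : Set.range (fac y n) = fac y n '' (Finset.range c : Set ℕ) := by
    apply Set.Subset.antisymm
    · rintro _ ⟨q, rfl⟩
      obtain ⟨r, hr, e⟩ := h q
      exact ⟨r, by simpa using hr, (fac_eq_iff.mpr e).symm⟩
    · rintro _ ⟨q, _, rfl⟩
      exact ⟨q, rfl⟩
  rw [this, Set.InjOn.ncard_image, Set.ncard_coe_finset, Finset.card_range]
  intro p hp q hq e
  simp only [Finset.coe_range, Set.mem_Iio] at hp hq
  rcases lt_trichotomy p q with hlt | heq | hlt
  · exact absurd (fac_eq_iff.mp e) (hd p q hlt hq)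
  · exact heq
  · exact absurd (fac_eq_iff.mp e.symm) (hd q p hlt hp)

/-- Morse–Hedlund: if the complexity of `y` does not increase from `n` to `n + 1`, every factor
of length `n` determines the rest of the word, so that the complexity is bounded. -/
theorem morse_hedlund {y : ℕ → ℕ} {n : ℕ} (hfin : (Set.range (fac y (n + 1))).Finite)
    (h : pc (n + 1) y ≤ pc n y) : ∀ m, pc m y ≤ pc n y := by
  rw [pc_eq, pc_eq, ← image_trunc y n] at h
  have hinj := Set.injOn_of_ncard_image_eq
    (le_antisymm (Set.ncard_image_le hfin) h) hfin
  have hstep : ∀ p q, E y n p q → E y (n + 1) p q := by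
    intro p q e
    exact fac_eq_iff.mp (hinj (Set.mem_range_self p) (Set.mem_range_self q)
      (funext fun t => e t.1 t.2))
  have hall : ∀ m p q, E y n p q → E y m p q := by
    intro m p q e
    have : ∀ d, E y n (p + d) (q + d) := by
      intro d
      induction d with
      | zero => exact e
      | succ d ih => exact (hstep _ _ ih).shift 1 le_rfl
    intro t _
    exact hstep _ _ (this t) 0 (by omega)
  have hfin' : (Set.range (fac y n)).Finite := by
    rw [← image_trunc y n]; exact hfin.image _
  intro m
  rw [pc_eq, pc_eq]
  classical
  -- factors of length `m` are a function of those of length `n`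
  let g : (Fin n → ℕ) → (Fin m → ℕ) := fun w =>
    if hw : ∃ k, fac y n k = w then fac y m hw.choose else 0
  have : Set.range (fac y m) ⊆ g '' Set.range (fac y n) := by
    rintro _ ⟨k, rfl⟩
    refine ⟨fac y n k, ⟨k, rfl⟩, ?_⟩
    have hw : ∃ k', fac y n k' = fac y n k := ⟨k, rfl⟩
    simp only [g, dif_pos hw]
    exact fac_eq_iff.mpr (hall m _ _ (fac_eq_iff.mp hw.choose_spec))
  exact (Set.ncard_le_ncard this (hfin'.image _)).trans (Set.ncard_image_le hfin')

/-- A word over a finite alphabet with unbounded complexity satisfies `n + 1 ≤ p(n)`. -/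
theorem pc_ge {y : ℕ → ℕ} (hfin : ∀ n, (Set.range (fac y n)).Finite)
    (hunb : ∀ c, ∃ m, c < pc m y) : ∀ n, n + 1 ≤ pc n y := by
  intro n
  induction n with
  | zero =>
    rw [pc_eq]
    exact (Set.ncard_pos (hfin 0)).mpr (Set.range_nonempty _)
  | succ n ih =>
    by_contra! hlt
    obtain ⟨m, hm⟩ := hunb (pc n y)
    have := morse_hedlund (hfin (n + 1)) (by omega) m
    omega

/-- Some suffix of a quasi-Sturmian word is recurrent: deleting a first letter that starts a
non-recurrent prefix lowers the complexity by one, and this can only happen finitely often. -/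
theorem exists_recurrent (b : ℕ) (s : ℕ → ℕ) (hdig : ∀ k, s k < b) (k₀ n₀ : ℕ)
    (hs : ∀ n ≥ n₀, pc n s = n + k₀) :
    ∃ N k n₁, (∀ n ≥ n₁, pc n (fun i => s (N + i)) = n + k) ∧
      ∀ n, ∃ q ≥ 1, E (fun i => s (N + i)) n 0 q := by
  have hfin : ∀ N n, (Set.range (fac (fun i => s (N + i)) n)).Finite := by
    intro N n
    refine (Set.Finite.pi (fun _ : Fin n => Set.finite_Iio b)).subset ?_
    rintro _ ⟨q, rfl⟩ t _
    exact hdig _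
  by_contra hno
  have key : ∀ N, ∃ n₁, ∀ n ≥ n₁, pc n (fun i => s (N + i)) + N = n + k₀ := by
    intro N
    induction N with
    | zero => exact ⟨n₀, fun n hn => by simpa using hs n hn⟩
    | succ N ih =>
      obtain ⟨n₁, h1⟩ := ih
      have hge := pc_ge (hfin N) (fun c =>
        ⟨n₁ + c + N + 1, by have := h1 (n₁ + c + N + 1) (by omega); omega⟩)
      have hnr : ∃ n₂, ∀ q ≥ 1, ¬ E (fun i => s (N + i)) n₂ 0 q := by
        by_contra! hr
        refine hno ⟨N, k₀ - N, n₁, fun n hn => ?_, hr⟩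
        have := h1 n hn
        have := hge n
        omega
      obtain ⟨n₂, h2⟩ := hnr
      refine ⟨max n₁ n₂, fun n hn => ?_⟩
      have e1 := h1 n (le_trans (le_max_left _ _) hn)
      have hins : Set.range (fac (fun i => s (N + i)) n) =
          insert (fac (fun i => s (N + i)) n 0) (Set.range (fac (fun i => s (N + 1 + i)) n)) := by
        have hsh : ∀ q, fac (fun i => s (N + 1 + i)) n q = fac (fun i => s (N + i)) n (q + 1) := by
          intro q
          funext t
          simp only [fac]
          congr 1
          omega
        ext w
        simp only [Set.mem_insert_iff, Set.mem_range]
        constructor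
        · rintro ⟨q, rfl⟩
          rcases q with _ | q
          · exact Or.inl rfl
          · exact Or.inr ⟨q, hsh q⟩
        · rintro (rfl | ⟨q, rfl⟩)
          · exact ⟨0, rfl⟩
          · exact ⟨q + 1, (hsh q).symm⟩
      have hnot : fac (fun i => s (N + i)) n 0 ∉ Set.range (fac (fun i => s (N + 1 + i)) n) := by
        rintro ⟨q, hq⟩
        apply h2 (q + 1) (by omega)
        refine E.mono ?_ (le_trans (le_max_right _ _) hn)
        rw [← fac_eq_iff, ← hq]
        funext t
        simp only [fac]
        congr 1
        omega
      rw [pc_eq, hins, Set.ncard_insert_of_notMem hnot (hfin _ _), ← pc_eq] at e1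
      omega
  obtain ⟨n₁, h1⟩ := key k₀
  have hge := pc_ge (hfin k₀) (fun c =>
    ⟨n₁ + c + k₀ + 1, by have := h1 (n₁ + c + k₀ + 1) (by omega); omega⟩)
  have := h1 n₁ le_rfl
  have := hge n₁
  omega

/-! ### First repetitions -/

/-- `FR y n j m`: the first repetition among the factors of length `n` of `y`, read from left
to right, occurs at position `m`, and repeats the factor at position `j`. -/
structure FR (y : ℕ → ℕ) (n j m : ℕ) : Prop where
  lt : j < m
  rep : E y n j m
  dist : ∀ p q, p < q → q < m → ¬ E y n p q

namespace FR

variable {y : ℕ → ℕ} {n j m j' m' : ℕ}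

theorem inj (h : FR y n j m) {p q : ℕ} (hp : p < m) (hq : q < m) (e : E y n p q) : p = q := by
  rcases lt_trichotomy p q with hlt | heq | hlt
  · exact absurd e (h.dist p q hlt hq)
  · exact heq
  · exact absurd e.symm (h.dist q p hlt hp)

theorem unique (h : FR y n j m) (h' : FR y n j' m') : j = j' ∧ m = m' := by
  have hm : m = m' := by
    rcases lt_trichotomy m m' with hlt | heq | hlt
    · exact absurd h.rep (h'.dist j m h.lt hlt)
    · exact heq
    · exact absurd h'.rep (h.dist j' m' h'.lt hlt)
  subst hm
  exact ⟨h.inj h.lt h'.lt (h.rep.trans h'.rep.symm), rfl⟩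

theorem exists_of_finite (hfin : (Set.range (fac y n)).Finite) : ∃ j m, FR y n j m := by
  classical
  have hex : ∃ m, ∃ j < m, E y n j m := by
    have : ¬ Function.Injective (fac y n) := fun hinj =>
      Set.infinite_range_of_injective hinj hfin
    simp only [Function.Injective, not_forall] at this
    obtain ⟨p, q, e, hpq⟩ := this
    rw [fac_eq_iff] at e
    rcases Nat.lt_or_gt_of_ne hpq with h | h
    · exact ⟨q, p, h, e⟩
    · exact ⟨p, q, h, e.symm⟩
  obtain ⟨j, hj, e⟩ := Nat.find_spec hex
  exact ⟨j, Nat.find hex, hj, e, fun p q hpq hq hE => Nat.find_min hex hq ⟨p, hpq, hE⟩⟩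

/-- If the first repeated factor is extended by the same letter, it is still the first one. -/
theorem succ (h : FR y n j m) (he : y (j + n) = y (m + n)) : FR y (n + 1) j m :=
  ⟨h.lt, h.rep.succ he, fun p q hpq hq hE => h.dist p q hpq hq (hE.mono (by omega))⟩

theorem lt_succ (h : FR y n j m) (he : y (j + n) ≠ y (m + n)) (h' : FR y (n + 1) j' m') :
    m < m' := by
  have e' := h'.rep.mono (Nat.le_succ n)
  have hlt := h'.lt
  rcases lt_trichotomy m m' with hlt | heq | hgt
  · exact hlt
  · subst heq
    have := h.inj h.lt h'.lt (h.rep.trans e'.symm)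
    subst this
    exact absurd (h'.rep n (by omega)) he
  · exact absurd e' (h.dist j' m' h'.lt hgt)

/-- When the first repeated factor of length `n` is right special, every factor of length `n + 1`
occurs before the first repetition among these factors.  More precisely, the factors occurring
from position `l` on occur at a position in `[l, m')`, provided that `l ≤ j` and `l ≤ j'`. -/
theorem exists_rep (hp : pc (n + 1) y = pc n y + 1) (h : FR y n j m)
    (he : y (j + n) ≠ y (m + n)) (h' : FR y (n + 1) j' m') {l : ℕ} (hl : l ≤ j) (hl' : l ≤ j') :
    ∀ q ≥ l, ∃ r, l ≤ r ∧ r < m' ∧ E y (n + 1) q r := by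
  intro q hq
  have hmm := h.lt_succ he h'
  have hlt := h.lt
  have hlt' := h'.lt
  induction q, hq using Nat.le_induction with
  | base => exact ⟨l, le_rfl, by omega, E.refl _ _⟩
  | succ q hq ih =>
    obtain ⟨r, hr, hrm, hE⟩ := ih
    have h1 : E y n (q + 1) (r + 1) := hE.shift 1 le_rfl
    obtain ⟨r', hr', hrm', h2⟩ : ∃ r', l ≤ r' ∧ r' < m' ∧ E y n (q + 1) r' := by
      rcases Nat.lt_or_ge (r + 1) m' with hlt | hge
      · exact ⟨r + 1, by omega, hlt, h1⟩
      · have : r + 1 = m' := by omega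
        rw [this] at h1
        exact ⟨j', hl', h'.lt, h1.trans (h'.rep.symm.mono (by omega))⟩
    by_cases hy : y (q + 1 + n) = y (r' + n)
    · exact ⟨r', hr', hrm', h2.succ hy⟩
    · rcases collision hp h2 hy h.rep he with ⟨c, _⟩ | ⟨c, _⟩
      · exact ⟨j, hl, by omega, c⟩
      · exact ⟨m, by omega, hmm, c⟩

/-- All the factors of length `n + 1` are read exactly once before the first repetition. -/
theorem eq_pc (hp : pc (n + 1) y = pc n y + 1) (h : FR y n j m)
    (he : y (j + n) ≠ y (m + n)) (h' : FR y (n + 1) j' m') : m' = pc (n + 1) y := by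
  refine (pc_eq_of_rep (fun q => ?_) h'.dist).symm
  obtain ⟨r, _, h1, h2⟩ := exists_rep hp h he h' (Nat.zero_le _) (Nat.zero_le _) q (Nat.zero_le _)
  exact ⟨r, h1, h2⟩

end FR

/-- `L` enumerates consecutive lengths, all large, at which the first repeated factor is right
special, because its two occurrences, at `J i` and `M i`, are followed by distinct letters. The
first repetition does not move between the lengths `L i + 1` and `L (i + 1)`, which is the meaning
of `frs`. The complexity of `y` is `n + K - 1` at the length `n`, and `y` is recurrent. -/
structure Levels (y : ℕ → ℕ) (K : ℕ) (L J M : ℕ → ℕ) : Prop where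
  incr : ∀ i n, L i ≤ n → pc (n + 1) y = pc n y + 1
  mono : StrictMono L
  fr : ∀ i, FR y (L i) (J i) (M i)
  ne : ∀ i, y (J i + L i) ≠ y (M i + L i)
  frs : ∀ i, FR y (L i + 1) (J (i + 1)) (M (i + 1))
  Ms : ∀ i, M (i + 1) = L i + K
  recur : ∀ n, ∃ q ≥ 1, E y n 0 q

/-- There are infinitely many levels: otherwise the first repetition would be the same at all large
lengths and the word would be eventually periodic. -/
theorem exists_levels {y : ℕ → ℕ} {k n₀ : ℕ} (hp : ∀ n ≥ n₀, pc n y = n + k)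
    (hrec : ∀ n, ∃ q ≥ 1, E y n 0 q) : ∃ L J M, Levels y (k + 1) L J M := by
  classical
  have hex : ∀ n, ∃ jm : ℕ × ℕ, n₀ + 1 ≤ n → FR y n jm.1 jm.2 := by
    intro n
    by_cases hn : n₀ + 1 ≤ n
    · obtain ⟨j, m, h⟩ := FR.exists_of_finite (range_fac_finite (hp n (by omega)) (by omega))
      exact ⟨(j, m), fun _ => h⟩
    · exact ⟨(0, 0), fun h => absurd h hn⟩
  choose f hf using hex
  have step : ∀ n, n₀ + 1 ≤ n → y ((f n).1 + n) = y ((f n).2 + n) → f (n + 1) = f n := by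
    intro n hn he
    have := (hf (n + 1) (by omega)).unique ((hf n hn).succ he)
    exact Prod.ext this.1 this.2
  have hinf : ∀ N, ∃ n, N ≤ n ∧ n₀ + 1 ≤ n ∧ y ((f n).1 + n) ≠ y ((f n).2 + n) := by
    intro N
    by_contra! hc
    -- otherwise the word would be eventually periodic
    set n₁ := max N (n₀ + 1) with hn₁
    have hN : N ≤ n₁ := le_max_left _ _
    have h0 : n₀ + 1 ≤ n₁ := le_max_right _ _
    have hconst : ∀ n ≥ n₁, f n = f n₁ := by
      intro n hn
      induction n, hn using Nat.le_induction with
      | base => rfl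
      | succ n hn ih => rw [step n (by omega) (hc n (by omega) (by omega)), ih]
    have hall : ∀ n, E y n (f n₁).1 (f n₁).2 := by
      intro n
      have h := (hf (max n n₁) (by omega)).rep
      rw [hconst _ (le_max_right _ _)] at h
      exact h.mono (le_max_left _ _)
    have hlt := (hf n₁ h0).lt
    have hb : pc (n₁ + (f n₁).2) y ≤ (f n₁).2 := by
      apply pc_le_of_rep
      intro q
      induction q using Nat.strong_induction_on with
      | _ q ih =>
        rcases Nat.lt_or_ge q (f n₁).2 with h | h
        · exact ⟨q, h, E.refl _ _⟩
        · obtain ⟨r, hr, e⟩ := ih (q - (f n₁).2 + (f n₁).1) (by omega)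
          refine ⟨r, hr, E.trans ?_ e⟩
          have := ((hall (n₁ + (f n₁).2 + (q - (f n₁).2))).symm).shift
            (m := n₁ + (f n₁).2) (q - (f n₁).2) (by omega)
          rwa [show (f n₁).2 + (q - (f n₁).2) = q by omega, add_comm (f n₁).1] at this
    rw [hp _ (by omega)] at hb
    omega
  have hinf' : ∀ N, ∃ n, N ≤ n ∧ n₀ + 1 ≤ n ∧ y ((f n).1 + n) ≠ y ((f n).2 + n) ∧
      (n₀ + 1 ≤ N → f n = f N) := by
    intro N
    have hs := Nat.find_spec (hinf N)
    refine ⟨Nat.find (hinf N), hs.1, hs.2.1, hs.2.2, fun hN => ?_⟩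
    have : ∀ n ≥ N, n ≤ Nat.find (hinf N) → f n = f N := by
      intro n hn
      induction n, hn using Nat.le_induction with
      | base => intro _; rfl
      | succ n hn ih =>
        intro hle
        rw [step n (by omega) ?_, ih (by omega)]
        by_contra hne
        exact Nat.find_min (hinf N) (by omega) ⟨hn, by omega, hne⟩
    exact this _ hs.1 le_rfl
  choose nx h1 h2 h3 h4 using hinf'
  let L : ℕ → ℕ := fun i => Nat.rec (nx 0) (fun _ l => nx (l + 1)) i
  have hL : ∀ i, L (i + 1) = nx (L i + 1) := fun i => rfl
  have hL0 : ∀ i, n₀ + 1 ≤ L i := by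
    intro i
    cases i with
    | zero => exact h2 0
    | succ i => rw [hL]; exact h2 _
  have hne : ∀ i, y ((f (L i)).1 + L i) ≠ y ((f (L i)).2 + L i) := by
    intro i
    cases i with
    | zero => exact h3 0
    | succ i => rw [hL]; exact h3 _
  have hpp : ∀ n, n₀ ≤ n → pc (n + 1) y = pc n y + 1 := by
    intro n hn
    rw [hp n hn, hp (n + 1) (by omega)]; omega
  have hfs : ∀ i, FR y (L i + 1) (f (L (i + 1))).1 (f (L (i + 1))).2 := by
    intro i
    have h0 := hL0 i
    rw [hL, h4 (L i + 1) (by omega)]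
    exact hf _ (by omega)
  refine ⟨L, fun i => (f (L i)).1, fun i => (f (L i)).2, ?_, ?_, ?_, hne, hfs, ?_, hrec⟩
  · intro i n hn
    have := hL0 i
    exact hpp _ (by omega)
  · refine strictMono_nat_of_lt_succ fun i => ?_
    have := h1 (L i + 1)
    rw [hL]; omega
  · intro i
    exact hf _ (hL0 i)
  · intro i
    have h0 := hL0 i
    have := (hf _ h0).eq_pc (hpp _ (by omega)) (hne i) (hfs i)
    rw [hp _ (by omega)] at this
    omega

/-! ### Combinatorics of the right special levels -/

namespace Levels

variable {y : ℕ → ℕ} {K : ℕ} {L J M : ℕ → ℕ}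

theorem tail (D : Levels y K L J M) (d : ℕ) :
    Levels y K (fun i => L (d + i)) (fun i => J (d + i)) (fun i => M (d + i)) where
  incr i := D.incr (d + i)
  mono _ _ h := D.mono (Nat.add_lt_add_left h d)
  fr i := D.fr (d + i)
  ne i := D.ne (d + i)
  frs i := D.frs (d + i)
  Ms i := D.Ms (d + i)
  recur := D.recur

theorem add_le (D : Levels y K L J M) (i d : ℕ) : L i + d ≤ L (i + d) := by
  induction d with
  | zero => exact le_rfl
  | succ d ih =>
    have := D.mono (Nat.lt_succ_self (i + d))
    rw [← add_assoc]
    exact Nat.succ_le_of_lt (lt_of_le_of_lt ih this)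

/-- Two consecutive first repetitions cannot both miss the initial factor: otherwise it would
never occur again. -/
theorem J_eq_zero (D : Levels y K L J M) (i : ℕ) : J i = 0 ∨ J (i + 1) = 0 := by
  by_contra! hc
  obtain ⟨q, hq, e⟩ := D.recur (L i + 1)
  obtain ⟨r, hr, hrm, e'⟩ := FR.exists_rep (D.incr i _ le_rfl) (D.fr i) (D.ne i) (D.frs i)
    (l := 1) (by omega) (by omega) q hq
  exact (D.frs i).dist 0 r (by omega) hrm (e.trans e')

/-- The right special factor of length `L i` is a suffix of the one of length `L i'`. -/
theorem suffix (D : Levels y K L J M) {i i' : ℕ} (h : i ≤ i') :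
    E y (L i) (J i) (J i' + (L i' - L i)) := by
  have hL := D.mono.monotone h
  have e := (D.fr i').rep.shift (m := L i) (L i' - L i) (by omega)
  have ne := D.ne i'
  have hne : y (J i' + (L i' - L i) + L i) ≠ y (M i' + (L i' - L i) + L i) := by
    rwa [show J i' + (L i' - L i) + L i = J i' + L i' by omega,
      show M i' + (L i' - L i) + L i = M i' + L i' by omega]
  rcases collision (D.incr i _ le_rfl) (D.fr i).rep (D.ne i) e hne with ⟨c, _⟩ | ⟨c, _⟩
  · exact c.mono (by omega)
  · exact (c.mono (by omega)).trans e.symm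

/-- If the prefixes of lengths `L i` and `L (i + 1)` are both right special, then the former occurs
in the latter at the position `L (i + 1) - L i`, which cannot precede its second occurrence. -/
theorem add_M_le (D : Levels y K L J M) {i : ℕ} (h0 : J i = 0) (h1 : J (i + 1) = 0) :
    L i + M i ≤ L (i + 1) := by
  by_contra! hc
  have hL := D.mono (Nat.lt_succ_self i)
  have e := D.suffix (Nat.le_succ i)
  simp only [Nat.succ_eq_add_one] at e hL
  rw [h0, h1, zero_add] at e
  exact (D.fr i).dist 0 (L (i + 1) - L i) (by omega) (by omega) e

/-- The right special factor of length `L i` is a suffix of the prefix of length `L (i + 1)`, at a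
position before `M i`, where its only occurrence is at `J i`. -/
theorem L_succ_eq (D : Levels y K L J M) {i : ℕ} (h1 : J (i + 1) = 0)
    (hc : L (i + 1) < L i + M i) : L (i + 1) = L i + J i := by
  have hL := D.mono (Nat.lt_succ_self i)
  have e := D.suffix (Nat.le_succ i)
  simp only [Nat.succ_eq_add_one] at e hL
  rw [h1, zero_add] at e
  have := (D.fr i).inj (D.fr i).lt (by omega) e
  omega

theorem M_lt (D : Levels y K L J M) (i : ℕ) : M i < M (i + 1) :=
  (D.fr i).lt_succ (D.ne i) (D.frs i)

/-- Before the next first repetition, a right special prefix only occurs at `0` and `M i`. -/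
theorem le_of_occ (D : Levels y K L J M) {i r : ℕ} (h0 : J i = 0) (e : E y (L i) 0 r)
    (hr0 : r ≠ 0) (hr : r ≠ M i) : M (i + 1) ≤ r := by
  by_contra! hlt
  have hne : y (0 + L i) ≠ y (r + L i) := fun he =>
    (D.frs i).dist 0 r (by omega) hlt (e.succ he)
  have f := (D.fr i).rep
  have g := D.ne i
  rw [h0] at f g
  rcases collision (D.incr i _ le_rfl) f g e hne with ⟨_, c⟩ | ⟨c, _⟩
  · exact hr ((D.frs i).inj hlt (D.M_lt i) c.symm)
  · exact (D.frs i).dist 0 r (by omega) hlt c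

/-- If a prefix is right special, the path leaving its second occurrence must come back to the
first cycle, for otherwise the prefix would not occur any more. -/
theorem J_succ_le (D : Levels y K L J M) {i : ℕ} (h0 : J i = 0) : J (i + 1) ≤ M i := by
  by_contra! hlt
  have hj := (D.frs i).lt
  have f := (D.fr i).rep
  have g := D.ne i
  rw [h0] at f g
  have key : ∀ q ≥ M i + 1, ∃ r, M i + 1 ≤ r ∧ r < M (i + 1) ∧ E y (L i + 1) q r := by
    intro q hq
    induction q, hq using Nat.le_induction with
    | base => exact ⟨_, le_rfl, by omega, E.refl _ _⟩
    | succ q hq ih =>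
      obtain ⟨r, hr, hrm, e⟩ := ih
      have e1 : E y (L i) (q + 1) (r + 1) := e.shift 1 le_rfl
      obtain ⟨r', hr', hrm', e'⟩ : ∃ r', M i + 1 ≤ r' ∧ r' < M (i + 1) ∧
          E y (L i) (q + 1) r' := by
        rcases Nat.lt_or_ge (r + 1) (M (i + 1)) with h | h
        · exact ⟨r + 1, by omega, h, e1⟩
        · rw [show r + 1 = M (i + 1) by omega] at e1
          exact ⟨J (i + 1), hlt, hj, e1.trans ((D.frs i).rep.symm.mono (by omega))⟩
      by_cases hy : y (q + 1 + L i) = y (r' + L i)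
      · exact ⟨r', hr', hrm', e'.succ hy⟩
      · exfalso
        have e0 : E y (L i) 0 r' := by
          rcases collision (D.incr i _ le_rfl) f g e' hy with ⟨c, _⟩ | ⟨c, _⟩
          · exact (c.mono (by omega)).trans e'
          · exact c.mono (by omega)
        have := D.le_of_occ h0 e0 (by omega) (by omega)
        omega
  have e := D.suffix (Nat.le_add_right i (M i + 1))
  have hL := D.add_le i (M i + 1)
  obtain ⟨r, hr, hrm, e'⟩ := key (J (i + (M i + 1)) + (L (i + (M i + 1)) - L i)) (by omega)
  rw [h0] at e
  have := D.le_of_occ h0 (e.trans (e'.mono (by omega))) (by omega) (by omega)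
  omega

/-- Three consecutive levels of which the middle one does not involve the initial factor. -/
structure Trip (L J : ℕ → ℕ) (i : ℕ) : Prop where
  h0 : J i = 0
  h1 : 0 < J (i + 1)
  h2 : J (i + 2) = 0
  hL : L (i + 2) = L (i + 1) + J (i + 1)

/-- From `J (i + 1)` on, the word has period `M (i + 1) - J (i + 1)`. -/
theorem per (D : Levels y K L J M) {i : ℕ} (T : Trip L J i) {n q : ℕ} (hq : J (i + 1) ≤ q)
    (hn : q + n ≤ L (i + 2)) : E y n q (q + (M (i + 1) - J (i + 1))) := by
  have hL := T.hL
  have hlt := (D.fr (i + 1)).lt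
  have := (D.fr (i + 1)).rep.shift (m := n) (q - J (i + 1)) (by omega)
  rwa [show J (i + 1) + (q - J (i + 1)) = q by omega,
    show M (i + 1) + (q - J (i + 1)) = q + (M (i + 1) - J (i + 1)) by omega] at this

theorem L_lt (D : Levels y K L J M) (i : ℕ) : L i < L (i + 1) := D.mono (Nat.lt_succ_self i)

/-- Occurrences of the right special prefix of length `L i` inside the prefix of length
`L (i + 2)`: they follow the first cycle once, then the second cycle several times. -/
theorem occ (D : Levels y K L J M) {i : ℕ} (T : Trip L J i) {g : ℕ} (hg : 0 < g)
    (e : E y (L i) 0 g) (hle : g + L i ≤ L (i + 2)) :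
    (∃ v, g = M i + v * (M (i + 1) - J (i + 1))) ∧ E y (L i + 1) (M i) g := by
  induction g using Nat.strong_induction_on with
  | _ g ih =>
    by_cases hgM : g = M i
    · subst hgM
      exact ⟨⟨0, by simp⟩, E.refl _ _⟩
    · have hge := D.le_of_occ T.h0 e (by omega) hgM
      have hlt := (D.fr (i + 1)).lt
      have h1 := T.h1
      have hp := D.per T (n := L i + 1) (q := g - (M (i + 1) - J (i + 1))) (by omega) (by omega)
      rw [show g - (M (i + 1) - J (i + 1)) + (M (i + 1) - J (i + 1)) = g by omega] at hp
      obtain ⟨⟨v, hv⟩, e'⟩ := ih (g - (M (i + 1) - J (i + 1))) (by omega) (by omega)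
        (e.trans (hp.symm.mono (by omega))) (by omega)
      refine ⟨⟨v + 1, ?_⟩, e'.trans hp⟩
      rw [add_mul, one_mul]
      omega

theorem occ_last (D : Levels y K L J M) {i : ℕ} (T : Trip L J i) :
    (∃ v, L (i + 2) - L i = M i + v * (M (i + 1) - J (i + 1))) ∧
      E y (L i + 1) (M i) (L (i + 2) - L i) := by
  have h1 := D.L_lt i
  have h2 : L (i + 1) < L (i + 2) := D.L_lt (i + 1)
  have e := D.suffix (show i ≤ i + 2 by omega)
  rw [T.h0, T.h2, zero_add] at e
  exact D.occ T (by omega) e (by omega)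

/-- The second cycle at level `i + 2` is the period of the prefix of length `L (i + 2)` that
comes from the level `i`. -/
theorem next_cycle (D : Levels y K L J M) {i : ℕ} (T : Trip L J i) (T' : Trip L J (i + 2)) :
    M (i + 3) - J (i + 3) = L (i + 2) - L i := by
  obtain ⟨⟨v, hv⟩, hd⟩ := D.occ_last T
  obtain ⟨⟨v', hv'⟩, hd'⟩ := D.occ_last T'
  have l1 := D.L_lt i
  have l2 := D.L_lt (i + 1)
  have l3 := D.L_lt (i + 2)
  have l4 := D.L_lt (i + 3)
  have f := (D.fr i).rep
  have g := D.ne i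
  rw [T.h0] at f g
  have f' := (D.fr (i + 2)).rep
  have g' := D.ne (i + 2)
  rw [T'.h0] at f' g'
  have hno : ¬ E y (L i + 1) 0 (M i) := fun h => g (h _ (by omega))
  have hJ' := D.J_succ_le T'.h0
  have hlt' := (D.fr (i + 3)).lt
  have hJpos := T'.h1
  simp only [add_assoc, Nat.reduceAdd] at *
  set d := L (i + 2) - L i with hd_def
  set c := M (i + 3) - J (i + 3) with hc_def
  have eA : E y (L i + 1) 0 (M (i + 2) + d) := by
    have e := f'.shift (m := L i) d (by omega)
    have ne : y (0 + d + L i) ≠ y (M (i + 2) + d + L i) := by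
      rwa [show 0 + d + L i = 0 + L (i + 2) by omega,
        show M (i + 2) + d + L i = M (i + 2) + L (i + 2) by omega]
    rw [zero_add] at e ne
    rcases collision (D.incr i _ le_rfl) f g e ne with ⟨h, _⟩ | ⟨h, _⟩
    · exact absurd (h.trans hd.symm) hno
    · exact h
  have eB : ∀ n, L i + 1 ≤ n → n ≤ L (i + 2) → E y n 0 (M (i + 2) + d) := by
    intro n hn
    induction n, hn using Nat.le_induction with
    | base => exact fun _ => eA
    | succ n hn ih =>
      intro hle
      have e := ih (by omega)
      refine e.succ ?_
      by_contra hne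
      -- the right special factor of length `n` is a suffix of the one of length `L (i + 2)`
      have e2 := f'.shift (m := n) (L (i + 2) - n) (by omega)
      have ne : y (0 + (L (i + 2) - n) + n) ≠ y (M (i + 2) + (L (i + 2) - n) + n) := by
        rwa [show 0 + (L (i + 2) - n) + n = 0 + L (i + 2) by omega,
          show M (i + 2) + (L (i + 2) - n) + n = M (i + 2) + L (i + 2) by omega]
      rw [zero_add] at e2 ne
      have e3 : E y n 0 (L (i + 2) - n) := by
        rcases collision (D.incr i n (by omega)) e hne e2 ne with ⟨h, _⟩ | ⟨h, _⟩
        · exact h.mono (by omega)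
        · exact (h.mono (by omega)).trans e2.symm
      have := (D.occ T (g := L (i + 2) - n) (by omega) (e3.mono (by omega)) (by omega)).2
      exact hno ((e3.mono (by omega)).trans this.symm)
  have eC := eB (L (i + 2)) (by omega) le_rfl
  have h24 : M (i + 2) + L (i + 2) ≤ L (i + 4) := by
    have : 0 ≤ v' * c := Nat.zero_le _
    omega
  rcases lt_trichotomy c d with hlt | heq | hgt
  · exfalso
    have e1 := D.per T' (n := L (i + 2)) (q := M (i + 2)) (by simpa [add_assoc] using hJ')
      (by simpa [add_assoc] using h24)
    simp only [add_assoc, Nat.reduceAdd] at e1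
    rw [← hc_def] at e1
    have e2 := f'.shift (m := L i + 1) c (by omega)
    rw [zero_add] at e2
    have e3 : E y (L i + 1) 0 c := ((f'.trans e1).mono (by omega)).trans e2.symm
    have := (D.occ T (g := c) (by omega) (e3.mono (by omega)) (by omega)).2
    exact hno (e3.trans this.symm)
  · exact heq
  · exfalso
    have hge := D.le_of_occ T'.h0 eC (by omega) (by omega)
    simp only [add_assoc, Nat.reduceAdd] at hge
    have e1 := D.per T' (n := L (i + 2)) (q := M (i + 2) + d - c)
      (by simp only [add_assoc, Nat.reduceAdd]; omega)
      (by simp only [add_assoc, Nat.reduceAdd]; omega)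
    simp only [add_assoc, Nat.reduceAdd] at e1
    rw [← hc_def, show M (i + 2) + d - c + c = M (i + 2) + d by omega] at e1
    exact (D.fr (i + 2)).dist 0 (M (i + 2) + d - c) (by omega) (by omega) (eC.trans e1.symm)

end Levels

/-! ### The extremal recurrence -/

/-- The recurrence attached to an alternating sequence of levels, under the growth constraint with
ratio `lam`. Every second level is a right special prefix of length `A t`, whose second occurrence
is at `B t`. The second cycle through it has length `C t`, and is followed `u t + 1` times before
the position `B (t + 1)`. -/
structure Rec (lam : ℝ) (A B C : ℕ → ℝ) (u : ℕ → ℕ) : Prop where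
  hA : ∀ t, A (t + 1) = A t + B t + u t * C t
  hB : ∀ t, B (t + 1) = B t + (u t + 1) * C t
  hC : ∀ t, C (t + 1) = B t + u t * C t
  c1 : ∀ t, A t ≤ lam * B t
  c2 : ∀ t, A t ≤ B t + C t
  c3 : ∀ t, B (t + 1) ≤ lam * A t
  pA : ∀ t, 0 < A t
  pB : ∀ t, 0 < B t
  pC : ∀ t, 0 < C t

namespace Rec

variable {lam : ℝ} {A B C : ℕ → ℝ} {u : ℕ → ℕ}

/-- A single step with the constraints, in a form linear in the unknowns: `w` stands for the product
`u t * C t`. -/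
theorem step (R : Rec (1.51) A B C u) (t : ℕ) :
    ∃ w, A (t + 1) = A t + B t + w ∧ B (t + 1) = B t + C t + w ∧ C (t + 1) = B t + w ∧
      A t ≤ 1.51 * B t ∧ A t ≤ B t + C t ∧ B (t + 1) ≤ 1.51 * A t ∧
      A (t + 1) ≤ 1.51 * B (t + 1) ∧ A (t + 1) ≤ B (t + 1) + C (t + 1) ∧
      0 < A t ∧ 0 < B t ∧ 0 < C t ∧
      (u t = 0 ∧ w = 0 ∨ u t = 1 ∧ w = C t ∨ 2 ≤ u t ∧ 2 * C t ≤ w) := by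
  have hB := R.hB t
  refine ⟨u t * C t, R.hA t, by linarith, R.hC t, R.c1 t, R.c2 t, R.c3 t, R.c1 (t + 1),
    R.c2 (t + 1), R.pA t, R.pB t, R.pC t, ?_⟩
  rcases Nat.lt_or_ge (u t) 2 with h | h
  · interval_cases u t <;> simp
  · exact .inr (.inr ⟨h, mul_le_mul_of_nonneg_right (by exact_mod_cast h) (R.pC t).le⟩)

theorem u_le_one (R : Rec (1.51) A B C u) (t : ℕ) : u t ≤ 1 := by
  by_contra! hu
  obtain ⟨w, a1, a2, a3, a4, a5, a6, a6', a6'', a7, a8, a9, a0⟩ := R.step t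
  obtain ⟨x, b1, b2, b3, b4, b5, b6, b6', b6'', b7, b8, b9, b0⟩ := R.step (t + 1)
  obtain ⟨z, d1, d2, d3, d4, d5, d6, d6', d6'', d7, d8, d9, d0⟩ := R.step (t + 2)
  simp only [add_assoc, Nat.reduceAdd] at *
  rcases a0 with ⟨h, a0⟩ | ⟨h, a0⟩ | ⟨h, a0⟩
  · omega
  · omega
  rcases b0 with ⟨_, b0⟩ | ⟨_, b0⟩ | ⟨_, b0⟩ <;> rcases d0 with ⟨_, d0⟩ | ⟨_, d0⟩ | ⟨_, d0⟩ <;>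
    linarith

theorem step' (R : Rec (1.51) A B C u) (t : ℕ) :
    ∃ w, A (t + 1) = A t + B t + w ∧ B (t + 1) = B t + C t + w ∧ C (t + 1) = B t + w ∧
      A t ≤ 1.51 * B t ∧ A t ≤ B t + C t ∧ B (t + 1) ≤ 1.51 * A t ∧
      A (t + 1) ≤ 1.51 * B (t + 1) ∧ A (t + 1) ≤ B (t + 1) + C (t + 1) ∧
      0 < A t ∧ 0 < B t ∧ 0 < C t ∧ (u t = 0 ∧ w = 0 ∨ u t = 1 ∧ w = C t) := by
  obtain ⟨w, a1, a2, a3, a4, a5, a6, a6', a6'', a7, a8, a9, a0⟩ := R.step t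
  have := R.u_le_one t
  refine ⟨w, a1, a2, a3, a4, a5, a6, a6', a6'', a7, a8, a9, ?_⟩
  rcases a0 with h | h | h
  · exact .inl h
  · exact .inr h
  · omega

theorem not_one_one (R : Rec (1.51) A B C u) (t : ℕ) (h : u t = 1) : u (t + 1) = 0 := by
  obtain ⟨w, a1, a2, a3, a4, a5, a6, a6', a6'', a7, a8, a9, a0⟩ := R.step' t
  obtain ⟨x, b1, b2, b3, b4, b5, b6, b6', b6'', b7, b8, b9, b0⟩ := R.step' (t + 1)
  rcases b0 with ⟨k, b0⟩ | ⟨k, b0⟩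
  · exact k
  · exfalso
    rcases a0 with ⟨_, a0⟩ | ⟨_, a0⟩
    · omega
    linarith

/-- After two steps the constraints kill every continuation of the multiplicities `1, 0, 1`. -/
theorem not_one_zero_one (R : Rec (1.51) A B C u) (t : ℕ) (h : u t = 1) : u (t + 2) = 0 := by
  have h1 := R.not_one_one t h
  by_contra h2
  obtain ⟨w, a1, a2, a3, a4, a5, a6, a6', a6'', a7, a8, a9, a0⟩ := R.step' t
  obtain ⟨x, b1, b2, b3, b4, b5, b6, b6', b6'', b7, b8, b9, b0⟩ := R.step' (t + 1)
  obtain ⟨z, d1, d2, d3, d4, d5, d6, d6', d6'', d7, d8, d9, d0⟩ := R.step' (t + 2)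
  obtain ⟨v, e1, e2, e3, e4, e5, e6, e6', e6'', e7, e8, e9, e0⟩ := R.step' (t + 3)
  obtain ⟨r, f1, f2, f3, f4, f5, f6, f6', f6'', f7, f8, f9, f0⟩ := R.step' (t + 4)
  simp only [add_assoc, Nat.reduceAdd] at *
  rcases a0 with ⟨_, a0⟩ | ⟨_, a0⟩
  · omega
  rcases b0 with ⟨_, b0⟩ | ⟨_, b0⟩
  swap
  · omega
  rcases d0 with ⟨_, d0⟩ | ⟨_, d0⟩
  · omega
  rcases e0 with ⟨_, e0⟩ | ⟨_, e0⟩ <;> rcases f0 with ⟨_, f0⟩ | ⟨_, f0⟩ <;> linarith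

theorem one_zero_zero_one (R : Rec (1.51) A B C u) (t : ℕ) (h : u t = 1) : u (t + 3) = 1 := by
  have h1 := R.not_one_one t h
  have h2 := R.not_one_zero_one t h
  by_contra h3
  obtain ⟨w, a1, a2, a3, a4, a5, a6, a6', a6'', a7, a8, a9, a0⟩ := R.step' t
  obtain ⟨x, b1, b2, b3, b4, b5, b6, b6', b6'', b7, b8, b9, b0⟩ := R.step' (t + 1)
  obtain ⟨z, d1, d2, d3, d4, d5, d6, d6', d6'', d7, d8, d9, d0⟩ := R.step' (t + 2)
  obtain ⟨v, e1, e2, e3, e4, e5, e6, e6', e6'', e7, e8, e9, e0⟩ := R.step' (t + 3)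
  simp only [add_assoc, Nat.reduceAdd] at *
  rcases a0 with ⟨_, a0⟩ | ⟨_, a0⟩
  · omega
  rcases b0 with ⟨_, b0⟩ | ⟨_, b0⟩
  swap
  · omega
  rcases d0 with ⟨_, d0⟩ | ⟨_, d0⟩
  swap
  · omega
  rcases e0 with ⟨_, e0⟩ | ⟨_, e0⟩
  · linarith
  · omega

theorem exists_one (R : Rec (1.51) A B C u) : ∃ t, u t = 1 := by
  by_contra! hu
  have hu0 : ∀ t, u t = 0 := fun t => by have := R.u_le_one t; have := hu t; omega
  obtain ⟨w, a1, a2, a3, a4, a5, a6, a6', a6'', a7, a8, a9, a0⟩ := R.step' 0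
  obtain ⟨x, b1, b2, b3, b4, b5, b6, b6', b6'', b7, b8, b9, b0⟩ := R.step' 1
  obtain ⟨z, d1, d2, d3, d4, d5, d6, d6', d6'', d7, d8, d9, d0⟩ := R.step' 2
  obtain ⟨v, e1, e2, e3, e4, e5, e6, e6', e6'', e7, e8, e9, e0⟩ := R.step' 3
  simp only [hu0, zero_add, true_and, zero_ne_one, false_and, or_false, Nat.reduceAdd] at *
  linarith

theorem mono_lam (R : Rec lam A B C u) {lam' : ℝ} (h : lam ≤ lam') : Rec lam' A B C u where
  hA := R.hA
  hB := R.hB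
  hC := R.hC
  c1 t := (R.c1 t).trans (mul_le_mul_of_nonneg_right h (R.pB t).le)
  c2 := R.c2
  c3 t := (R.c3 t).trans (mul_le_mul_of_nonneg_right h (R.pA t).le)
  pA := R.pA
  pB := R.pB
  pC := R.pC

/-- The recurrence is eventually periodic with multiplicities `0, 0, 1`; along the periods
`A - 2 / 3 * B - C` is constant, while the component of `(B, C)` along the contracting eigenvector
is multiplied by `3 - √10 < 0`. Hence the constraint is asymptotically violated every second
period. -/
theorem impossible (R : Rec lam A B C u) (hlam : lam < 2 / 3 + 4 * √10 / 15)
    (hB : ∀ t : ℕ, (t : ℝ) ≤ B t) : False := by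
  obtain ⟨q, hq⟩ : ∃ q, q = √10 := ⟨_, rfl⟩
  have hq2 : q * q = 10 := by rw [hq]; exact Real.mul_self_sqrt (by norm_num)
  have hq0 : 0 ≤ q := by rw [hq]; exact Real.sqrt_nonneg _
  rw [← hq] at hlam
  have hq3 : 3 < q := by nlinarith
  have hq4 : q < 3.1623 := by nlinarith
  -- the exclusion lemmas leave a margin: the critical ratio is `1.50994…`
  have R' := R.mono_lam (lam' := 1.51) (by linarith)
  obtain ⟨t₀, ht₀⟩ := R'.exists_one
  have hu : ∀ m, u (t₀ + 3 * m) = 1 := by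
    intro m
    induction m with
    | zero => exact ht₀
    | succ m ih => exact R'.one_zero_zero_one _ ih
  have hper : ∀ m, A (t₀ + 1 + 3 * m) + 2 * B (t₀ + 1 + 3 * m) + C (t₀ + 1 + 3 * m) ≤
        lam * (2 * B (t₀ + 1 + 3 * m) + C (t₀ + 1 + 3 * m)) ∧
      A (t₀ + 1 + 3 * (m + 1)) =
        A (t₀ + 1 + 3 * m) + 5 * B (t₀ + 1 + 3 * m) + 3 * C (t₀ + 1 + 3 * m) ∧
      B (t₀ + 1 + 3 * (m + 1)) = 4 * B (t₀ + 1 + 3 * m) + 3 * C (t₀ + 1 + 3 * m) ∧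
      C (t₀ + 1 + 3 * (m + 1)) = 3 * B (t₀ + 1 + 3 * m) + 2 * C (t₀ + 1 + 3 * m) := by
    intro m
    have e : t₀ + 1 + 3 * (m + 1) = t₀ + 1 + 3 * m + 1 + 1 + 1 := by ring
    have e' : t₀ + 1 + 3 * m + 1 + 1 = t₀ + 3 * (m + 1) := by ring
    have e0 := hu m
    have z1 : u (t₀ + 1 + 3 * m) = 0 := by
      have := R'.not_one_one _ e0
      rwa [show t₀ + 3 * m + 1 = t₀ + 1 + 3 * m by ring] at this
    have z2 : u (t₀ + 1 + 3 * m + 1) = 0 := by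
      have := R'.not_one_zero_one _ e0
      rwa [show t₀ + 3 * m + 2 = t₀ + 1 + 3 * m + 1 by ring] at this
    have z3 : u (t₀ + 1 + 3 * m + 1 + 1) = 1 := by rw [e']; exact hu (m + 1)
    rw [e]
    generalize t₀ + 1 + 3 * m = t at *
    have c := R.c1 (t + 1 + 1)
    rw [R.hA (t + 1 + 1), R.hB (t + 1 + 1), R.hC (t + 1 + 1)]
    rw [R.hA (t + 1), R.hB (t + 1)] at *
    rw [R.hC (t + 1)]
    rw [R.hA t, R.hB t, R.hC t] at *
    rw [z1, z2] at *
    rw [z3]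
    push_cast at *
    refine ⟨?_, ?_, ?_, ?_⟩
    · calc _ = _ := ?_
        _ ≤ _ := c
        _ = _ := ?_
      · ring
      · ring
    all_goals ring
  obtain ⟨f, hf⟩ : ∃ f, f = A (t₀ + 1) - 2 / 3 * B (t₀ + 1) - C (t₀ + 1) := ⟨_, rfl⟩
  have hconst : ∀ m, A (t₀ + 1 + 3 * m) - 2 / 3 * B (t₀ + 1 + 3 * m) - C (t₀ + 1 + 3 * m) = f := by
    intro m
    induction m with
    | zero => exact hf.symm
    | succ m ih =>
      obtain ⟨-, h1, h2, h3⟩ := hper m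
      rw [h1, h2, h3]
      linarith
  obtain ⟨d, hd⟩ : ∃ d, d = 2 / 3 + 4 * q / 15 - lam := ⟨_, rfl⟩
  have hdpos : 0 < d := by linarith
  have hlam' : lam = 2 / 3 + 4 * q / 15 - d := by linarith
  obtain ⟨m, hm⟩ := exists_nat_gt (4 * |f| / d)
  rw [div_lt_iff₀ hdpos] at hm
  obtain ⟨h0, -, h2, h3⟩ := hper m
  obtain ⟨h0', -⟩ := hper (m + 1)
  have k := hconst m
  have k' := hconst (m + 1)
  have hb := R.pB (t₀ + 1 + 3 * m)
  have hc := R.pC (t₀ + 1 + 3 * m)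
  have hbm : (m : ℝ) ≤ B (t₀ + 1 + 3 * m) := by
    refine le_trans ?_ (hB _)
    push_cast
    have : (0 : ℝ) ≤ t₀ := Nat.cast_nonneg _
    have : (0 : ℝ) ≤ m := Nat.cast_nonneg _
    linarith
  rw [h2, h3] at k' h0'
  generalize A (t₀ + 1 + 3 * m) = a at *
  generalize B (t₀ + 1 + 3 * m) = b at *
  generalize C (t₀ + 1 + 3 * m) = c at *
  generalize A (t₀ + 1 + 3 * (m + 1)) = a' at *
  have ha : a = f + 2 / 3 * b + c := by linarith
  have ha' : a' = f + 2 / 3 * (4 * b + 3 * c) + (3 * b + 2 * c) := by linarith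
  subst ha ha' hlam'
  -- this combination of the constraints at two consecutive periods eliminates the component of
  -- `(b, c)` along the contracting eigenvector
  have h1 := mul_le_mul_of_nonneg_left h0 (show 0 ≤ q - 3 by linarith)
  have hfa := neg_abs_le f
  have hbd : d * m ≤ d * b := mul_le_mul_of_nonneg_left hbm hdpos.le
  have hcd : 0 < d * c := mul_pos hdpos hc
  have hx : 0 ≤ (q - 3) * (d * (2 * b + c)) := by
    have : 0 ≤ q - 3 := by linarith
    positivity
  have key : (q - 2) * f + (q - 3) * (d * (2 * b + c)) + d * (11 * b + 8 * c) ≤ 0 := by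
    have e1 : q * (q * b) = 10 * b := by rw [← mul_assoc, hq2]
    have e2 : q * (q * c) = 10 * c := by rw [← mul_assoc, hq2]
    linarith
  have hqf : -(2 * |f|) ≤ (q - 2) * f := by
    nlinarith [abs_nonneg f]
  linarith [abs_nonneg f]

end Rec

/-! ### Fast growth of the right special levels -/

namespace Levels

variable {y : ℕ → ℕ} {K : ℕ} {L J M : ℕ → ℕ}

/-- If all the ratios `L (i + 1) / L i` are below the critical value, then `J` vanishes at exactly
every second level, and the levels obey the recurrence `Rec`. The assumption `hK` absorbs the
additive constant `K` into the passage from `lam₀` to `lam`. -/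
theorem not_slow (D : Levels y K L J M) {lam₀ lam : ℝ} (h0 : 1 ≤ lam₀) (h1 : lam₀ < lam)
    (h2 : lam < 2 / 3 + 4 * √10 / 15) (hg : ∀ i, (L (i + 1) : ℝ) ≤ lam₀ * L i)
    (hK : ∀ i, (K : ℝ) ≤ (lam - lam₀) * L i) : False := by
  have hlam : lam₀ < 1.51 := by
    have : √10 < 3.1623 := by
      rw [Real.sqrt_lt' (by norm_num)]
      norm_num
    linarith
  have hM : ∀ i, L (i + 2) < L (i + 1) + M (i + 1) := by
    intro i
    have e := D.Ms i
    have p := (D.fr (i + 1)).lt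
    have g1 := hg i
    have g2 : (L (i + 2) : ℝ) ≤ lam₀ * L (i + 1) := hg (i + 1)
    have p' : (1 : ℝ) ≤ L i + K := by
      exact_mod_cast (show 1 ≤ L i + K by omega)
    rw [e]
    have : (L (i + 2) : ℝ) < L (i + 1) + (L i + K) := by
      have hK0 : (0 : ℝ) ≤ K := Nat.cast_nonneg _
      have hL0 : (0 : ℝ) ≤ L i := Nat.cast_nonneg _
      have m1 := mul_le_mul_of_nonneg_left g1 (show 0 ≤ lam₀ - 1 by linarith)
      have m2 : (lam₀ - 1) * (lam₀ * L i) ≤ 0.8 * L i := by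
        rw [← mul_assoc]
        exact mul_le_mul_of_nonneg_right (by nlinarith) hL0
      linarith
    exact_mod_cast this
  have hnz : ∀ i, J (i + 1) = 0 → 0 < J (i + 2) := by
    intro i e
    by_contra h
    have := D.add_M_le e (show J (i + 2) = 0 by omega)
    have := hM i
    simp only [add_assoc, Nat.reduceAdd] at *
    omega
  obtain ⟨d, hd⟩ : ∃ d, J (d + 1) = 0 := by
    rcases D.J_eq_zero 1 with h | h
    · exact ⟨0, h⟩
    · exact ⟨1, h⟩
  have hpat : ∀ t, J (d + 2 * t + 1) = 0 := by
    intro t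
    induction t with
    | zero => exact hd
    | succ t ih =>
      have h3 := hnz _ ih
      rcases D.J_eq_zero (d + 2 * t + 2) with h | h
      · omega
      · exact h
  have hT : ∀ t, Trip L J (d + 2 * t + 1) := by
    intro t
    refine ⟨hpat t, hnz _ (hpat t), hpat (t + 1), ?_⟩
    exact D.L_succ_eq (hpat (t + 1)) (hM (d + 2 * t + 1))
  choose u hu using fun t => (D.occ_last (hT t)).1
  have hidx : ∀ t, d + 2 * (t + 1) + 1 = d + 2 * t + 1 + 2 := fun t => by ring
  have hstep : ∀ t,
      L (d + 2 * (t + 1) + 1) = L (d + 2 * t + 1) + M (d + 2 * t + 1) +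
        u t * (M (d + 2 * t + 1 + 1) - J (d + 2 * t + 1 + 1)) ∧
      M (d + 2 * (t + 1) + 1) = M (d + 2 * t + 1) +
        (u t + 1) * (M (d + 2 * t + 1 + 1) - J (d + 2 * t + 1 + 1)) ∧
      M (d + 2 * (t + 1) + 1 + 1) - J (d + 2 * (t + 1) + 1 + 1) = M (d + 2 * t + 1) +
        u t * (M (d + 2 * t + 1 + 1) - J (d + 2 * t + 1 + 1)) := by
    intro t
    have T := hT t
    have T' := hT (t + 1)
    have hv := hu t
    rw [hidx t] at T' ⊢
    generalize d + 2 * t + 1 = i at *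
    have a1 := D.L_lt i
    have a2 : L (i + 1) < L (i + 2) := D.L_lt (i + 1)
    have a3 := T.hL
    have a4 := D.Ms i
    have a5 : M (i + 2) = L (i + 1) + K := D.Ms (i + 1)
    have a6 := (D.fr (i + 1)).lt
    have nc : M (i + 2 + 1) - J (i + 2 + 1) = L (i + 2) - L i := D.next_cycle T T'
    rw [nc, add_mul, one_mul]
    refine ⟨by omega, by omega, hv⟩
  have hc0 : ∀ i, ((L (i + 1) : ℝ)) ≤ lam₀ * M (i + 1) := by
    intro i
    rw [D.Ms i]
    refine (hg i).trans (mul_le_mul_of_nonneg_left ?_ (by linarith))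
    exact_mod_cast Nat.le_add_right _ _
  have R : Rec lam (fun t => L (d + 2 * t + 1)) (fun t => M (d + 2 * t + 1))
      (fun t => (M (d + 2 * t + 1 + 1) - J (d + 2 * t + 1 + 1) : ℕ)) u := by
    refine ⟨fun t => ?_, fun t => ?_, fun t => ?_, fun t => ?_, fun t => ?_, fun t => ?_,
      fun t => ?_, fun t => ?_, fun t => ?_⟩
    · exact_mod_cast (hstep t).1
    · exact_mod_cast (hstep t).2.1
    · exact_mod_cast (hstep t).2.2
    · exact (hc0 _).trans (mul_le_mul_of_nonneg_right h1.le (Nat.cast_nonneg _))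
    · have a1 := D.J_succ_le (hpat t)
      have a2 := D.Ms (d + 2 * t + 1)
      exact_mod_cast (show L (d + 2 * t + 1) ≤
        M (d + 2 * t + 1) + (M (d + 2 * t + 1 + 1) - J (d + 2 * t + 1 + 1)) by omega)
    · have a1 := hK (d + 2 * t + 1)
      have a2 := hg (d + 2 * t + 1)
      have a3 := D.Ms (d + 2 * t + 1 + 1)
      have e : M (d + 2 * (t + 1) + 1) = L (d + 2 * t + 1 + 1) + K := a3
      simp only [e]
      push_cast
      linarith
    · have := D.L_lt (d + 2 * t)
      exact_mod_cast (show 0 < L (d + 2 * t + 1) by omega)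
    · have := (D.fr (d + 2 * t + 1)).lt
      exact_mod_cast (show 0 < M (d + 2 * t + 1) by omega)
    · have := (D.fr (d + 2 * t + 1 + 1)).lt
      exact_mod_cast (show 0 < M (d + 2 * t + 1 + 1) - J (d + 2 * t + 1 + 1) by omega)
  refine R.impossible h2 fun t => ?_
  have := (strictMono_nat_of_lt_succ D.M_lt).le_apply (x := d + 2 * t + 1)
  exact_mod_cast (show t ≤ M (d + 2 * t + 1) by omega)

/-- Infinitely often, the quotient of consecutive levels exceeds any number below
`2 / 3 + 4 * √10 / 15`. -/
theorem fast (D : Levels y K L J M) {lam : ℝ} (h2 : lam < 2 / 3 + 4 * √10 / 15) (i₀ : ℕ) :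
    ∃ i ≥ i₀, lam * L i < L (i + 1) := by
  by_contra! hc
  obtain ⟨lam', h3, h4⟩ := exists_between (show max lam 1 < 2 / 3 + 4 * √10 / 15 by
    refine max_lt h2 ?_
    have : 3 ≤ √10 := by
      rw [Real.le_sqrt' (by norm_num)]
      norm_num
    linarith)
  obtain ⟨m, hm⟩ := exists_nat_gt ((K : ℝ) / (lam' - max lam 1))
  rw [div_lt_iff₀ (by linarith)] at hm
  refine (D.tail (i₀ + m)).not_slow (le_max_right lam 1) h3 h4 (fun i => ?_) (fun i => ?_)
  · refine (hc (i₀ + m + i) (by omega)).trans ?_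
    exact mul_le_mul_of_nonneg_right (le_max_left _ _) (Nat.cast_nonneg _)
  · have : m ≤ L (i₀ + m + i) := le_trans (by omega) D.mono.le_apply
    have h5 : (m : ℝ) ≤ L (i₀ + m + i) := by exact_mod_cast this
    have := mul_le_mul_of_nonneg_left h5 (show 0 ≤ lam' - max lam 1 by linarith)
    linarith

end Levels

/-! ### Tails of the expansion -/

section Expansion

variable {b : ℕ} {s : ℕ → ℕ}

/-- The number `0.s_k s_{k+1} …` in base `b`. -/
noncomputable def tl (b : ℕ) (s : ℕ → ℕ) (k : ℕ) : ℝ := ∑' j, (s (k + j) : ℝ) / (b : ℝ) ^ (j + 1)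

theorem hasSum_geom (hb : 2 ≤ b) : HasSum (fun j : ℕ => ((b : ℝ) - 1) / (b : ℝ) ^ (j + 1)) 1 := by
  have hb' : (2 : ℝ) ≤ b := by exact_mod_cast hb
  have h := (hasSum_geometric_of_lt_one (r := (b : ℝ)⁻¹) (by positivity)
    (inv_lt_one_of_one_lt₀ (by linarith))).mul_left (((b : ℝ) - 1) / b)
  have h1 : ((b : ℝ) - 1) / b * (1 - (b : ℝ)⁻¹)⁻¹ = 1 := by
    have : (b : ℝ) - 1 ≠ 0 := by linarith
    field_simp
  have h2 : (fun j : ℕ => ((b : ℝ) - 1) / (b : ℝ) ^ (j + 1)) =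
      fun j => ((b : ℝ) - 1) / b * (b : ℝ)⁻¹ ^ j := by
    funext j
    rw [pow_succ, inv_pow]
    field_simp
  rwa [h1, ← h2] at h

theorem term_le (hdig : ∀ k, s k < b) (k j : ℕ) :
    (s (k + j) : ℝ) / (b : ℝ) ^ (j + 1) ≤ ((b : ℝ) - 1) / (b : ℝ) ^ (j + 1) := by
  have h : (s (k + j) : ℝ) + 1 ≤ b := by exact_mod_cast hdig (k + j)
  gcongr
  linarith

theorem summable_tl (hb : 2 ≤ b) (hdig : ∀ k, s k < b) (k : ℕ) :
    Summable fun j => (s (k + j) : ℝ) / (b : ℝ) ^ (j + 1) :=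
  Summable.of_nonneg_of_le (fun _ => by positivity) (term_le hdig k) (hasSum_geom hb).summable

theorem tl_nonneg (k : ℕ) : 0 ≤ tl b s k := tsum_nonneg fun _ => by positivity

theorem tl_le_one (hb : 2 ≤ b) (hdig : ∀ k, s k < b) (k : ℕ) : tl b s k ≤ 1 := by
  rw [← (hasSum_geom hb).tsum_eq]
  exact (summable_tl hb hdig k).tsum_le_tsum (term_le hdig k) (hasSum_geom hb).summable

theorem tl_succ (hb : 2 ≤ b) (hdig : ∀ k, s k < b) (k : ℕ) :
    (b : ℝ) * tl b s k = s k + tl b s (k + 1) := by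
  have hb0 : (b : ℝ) ≠ 0 := by positivity
  unfold tl
  rw [(summable_tl hb hdig k).tsum_eq_zero_add, mul_add, ← tsum_mul_left]
  congr 1
  · field_simp
    simp
  · refine tsum_congr fun j => ?_
    rw [show k + (j + 1) = k + 1 + j by ring, pow_succ _ (j + 1)]
    field_simp

/-- Shifting the expansion by `n` digits amounts to multiplying by `b ^ n` modulo the integers. -/
theorem exists_int (hb : 2 ≤ b) (hdig : ∀ k, s k < b) (k n : ℕ) :
    ∃ z : ℤ, (b : ℝ) ^ n * tl b s k = z + tl b s (k + n) := by
  induction n with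
  | zero => exact ⟨0, by simp⟩
  | succ n ih =>
    obtain ⟨z, hz⟩ := ih
    refine ⟨b * z + s (k + n), ?_⟩
    have := tl_succ hb hdig (k + n)
    rw [pow_succ, mul_right_comm, hz]
    push_cast
    rw [← add_assoc]
    linarith

theorem tl_sub (hb : 2 ≤ b) (hdig : ∀ k, s k < b) {n p q : ℕ} (e : E s n p q) :
    (b : ℝ) ^ n * (tl b s p - tl b s q) = tl b s (p + n) - tl b s (q + n) := by
  induction n with
  | zero => simp
  | succ n ih =>
    have h := ih (e.mono (Nat.le_succ n))
    have h1 := tl_succ hb hdig (p + n)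
    have h2 := tl_succ hb hdig (q + n)
    rw [e n (Nat.lt_succ_self n)] at h1
    rw [pow_succ, mul_right_comm, h, ← add_assoc, ← add_assoc]
    linarith

/-- A repetition `E s n j m` yields the rational approximation whose expansion has the
preperiod `j` and the period `m - j`. -/
theorem exists_approx (hb : 2 ≤ b) (hdig : ∀ k, s k < b) {n j m : ℕ} (hjm : j < m)
    (e : E s n j m) {μ : ℝ} (hμ : 1 < μ) (hn : (μ - 1) * m ≤ n) :
    ∃ q : ℚ, |tl b s 0 - q| < 1 / (q.den : ℝ) ^ μ ∧ |tl b s 0 - q| ≤ 1 / (b : ℝ) ^ n := by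
  have hb1 : (1 : ℝ) < b := by exact_mod_cast hb
  have hb0 : (0 : ℝ) < b := by linarith
  obtain ⟨z, hz⟩ := exists_int hb hdig 0 m
  obtain ⟨z', hz'⟩ := exists_int hb hdig 0 j
  have hpow : b ^ j < b ^ m := Nat.pow_lt_pow_right hb hjm
  obtain ⟨D, hD⟩ : ∃ D, D = b ^ m - b ^ j := ⟨_, rfl⟩
  have hDpos : 0 < D := by omega
  have hDlt : D < b ^ m := by
    have : 0 < b ^ j := by positivity
    omega
  have hDc : (D : ℝ) = (b : ℝ) ^ m - (b : ℝ) ^ j := by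
    rw [hD, Nat.cast_sub hpow.le]
    push_cast
    rfl
  have hD1 : (1 : ℝ) ≤ D := by exact_mod_cast hDpos
  have hbn : (1 : ℝ) ≤ (b : ℝ) ^ n := one_le_pow₀ hb1.le
  have hsub := tl_sub hb hdig e
  have habs : |tl b s (j + n) - tl b s (m + n)| ≤ 1 := by
    rw [abs_sub_le_iff]
    have h1 := tl_nonneg (b := b) (s := s) (j + n)
    have h2 := tl_nonneg (b := b) (s := s) (m + n)
    have h3 := tl_le_one hb hdig (j + n)
    have h4 := tl_le_one hb hdig (m + n)
    constructor <;> linarith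
  rw [zero_add] at hz hz'
  have hdiff : (b : ℝ) ^ n * (D * (tl b s 0 - ((z - z' : ℤ) : ℝ) / D)) =
      -(tl b s (j + n) - tl b s (m + n)) := by
    rw [← hsub, mul_sub (D : ℝ), mul_div_cancel₀ _ (by positivity), hDc, sub_mul, hz, hz']
    push_cast
    ring
  have hle : |tl b s 0 - ((z - z' : ℤ) : ℝ) / D| ≤ 1 / ((b : ℝ) ^ n * D) := by
    rw [le_div_iff₀ (by positivity)]
    calc _ = |(b : ℝ) ^ n * (D * (tl b s 0 - ((z - z' : ℤ) : ℝ) / D))| := by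
          rw [abs_mul, abs_mul, abs_of_pos (show (0 : ℝ) < (b : ℝ) ^ n by positivity),
            abs_of_pos (show (0 : ℝ) < D by positivity)]
          ring
      _ ≤ 1 := by rwa [hdiff, abs_neg]
  refine ⟨((z - z' : ℤ) : ℚ) / (D : ℕ), ?_, ?_⟩
  · have hden : (((z - z' : ℤ) : ℚ) / (D : ℕ)).den ≤ D := by
      have h := Rat.den_dvd (z - z') (D : ℤ)
      rw [Rat.divInt_eq_div] at h
      exact Nat.le_of_dvd hDpos (by exact_mod_cast h)
    generalize hq : ((z - z' : ℤ) : ℚ) / (D : ℕ) = q at *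
    have hqc : (q : ℝ) = ((z - z' : ℤ) : ℝ) / D := by
      rw [← hq]
      push_cast
      rfl
    rw [hqc]
    refine hle.trans_lt ?_
    have hq0 : (0 : ℝ) < q.den := by exact_mod_cast q.den_pos
    apply one_div_lt_one_div_of_lt (by positivity)
    calc (q.den : ℝ) ^ μ ≤ (D : ℝ) ^ μ := by
          apply Real.rpow_le_rpow hq0.le (by exact_mod_cast hden) (by linarith)
      _ = (D : ℝ) ^ (μ - 1) * D := by
          rw [← Real.rpow_add_one (by positivity), sub_add_cancel]
      _ < (b : ℝ) ^ n * D := by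
          refine mul_lt_mul_of_pos_right ?_ (by positivity)
          calc (D : ℝ) ^ (μ - 1) < ((b : ℝ) ^ m) ^ (μ - 1) := by
                apply Real.rpow_lt_rpow (by positivity) (by exact_mod_cast hDlt) (by linarith)
            _ = (b : ℝ) ^ ((μ - 1) * m) := by
                rw [← Real.rpow_natCast, ← Real.rpow_mul hb0.le, mul_comm]
            _ ≤ (b : ℝ) ^ (n : ℝ) := Real.rpow_le_rpow_of_exponent_le hb1.le hn
            _ = (b : ℝ) ^ n := Real.rpow_natCast _ _
  · push_cast at hle ⊢
    refine hle.trans ?_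
    apply one_div_le_one_div_of_le (by positivity)
    exact le_mul_of_one_le_right (by positivity) hD1

/-- If the number is rational, two tails of its expansion coincide as numbers, and the digits can be
read off a tail unless it equals `1`, in which case all its digits are `b - 1`. -/
theorem periodic_of_rational (hb : 2 ≤ b) (hdig : ∀ k, s k < b) (h : ¬ Irrational (tl b s 0)) :
    ∃ k l, k < l ∧ ∀ i, s (k + i) = s (l + i) := by
  have hb1 : (2 : ℝ) ≤ b := by exact_mod_cast hb
  by_cases hone : ∃ k, tl b s k = 1
  · obtain ⟨k, hk⟩ := hone
    have hst : ∀ i, tl b s i = 1 → s i + 1 = b ∧ tl b s (i + 1) = 1 := by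
      intro i hi
      have h1 := tl_succ hb hdig i
      have h2 := tl_le_one hb hdig (i + 1)
      have h3 : (s i : ℝ) + 1 ≤ b := by exact_mod_cast hdig i
      rw [hi] at h1
      have h4 : (s i : ℝ) + 1 = b := by linarith
      exact ⟨by exact_mod_cast h4, by linarith⟩
    have hall : ∀ i, tl b s (k + i) = 1 := by
      intro i
      induction i with
      | zero => exact hk
      | succ i ih => exact (hst _ ih).2
    refine ⟨k, k + 1, Nat.lt_succ_self k, fun i => ?_⟩
    have h1 := (hst _ (hall i)).1
    have h2 := (hst _ (hall (1 + i))).1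
    rw [← add_assoc] at h2
    omega
  · push Not at hone
    have hlt : ∀ k, tl b s k < 1 := fun k => lt_of_le_of_ne (tl_le_one hb hdig k) (hone k)
    unfold Irrational at h
    push Not at h
    obtain ⟨r, hr⟩ := h
    have hd : (0 : ℝ) < r.den := by exact_mod_cast r.den_pos
    have hex : ∀ k, ∃ c : ℕ, c ≤ r.den ∧ (r.den : ℝ) * tl b s k = c := by
      intro k
      obtain ⟨z, hz⟩ := exists_int hb hdig 0 k
      rw [zero_add, ← hr] at hz
      have e : (r.den : ℝ) * tl b s k = ((b ^ k * r.num - r.den * z : ℤ) : ℝ) := by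
        have : tl b s k = (b : ℝ) ^ k * r - z := by linarith
        have hrr : (r.den : ℝ) * r = r.num := by exact_mod_cast Rat.den_mul_eq_num r
        rw [this]
        push_cast
        rw [← hrr]
        ring
      have h0 : (0 : ℝ) ≤ (r.den : ℝ) * tl b s k := mul_nonneg hd.le (tl_nonneg k)
      have h1 : (r.den : ℝ) * tl b s k ≤ r.den := mul_le_of_le_one_right hd.le (hlt k).le
      rw [e] at h0
      have h0' : (0 : ℤ) ≤ b ^ k * r.num - r.den * z := by exact_mod_cast h0
      obtain ⟨c, hc⟩ := Int.eq_ofNat_of_zero_le h0'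
      rw [hc] at e
      refine ⟨c, ?_, by rw [e]; simp⟩
      rw [e] at h1
      exact_mod_cast h1
    choose c hc hc' using hex
    obtain ⟨k, l, hkl, hv⟩ : ∃ k l, k < l ∧ c k = c l := by
      obtain ⟨k, -, l, -, hne, he⟩ := Set.infinite_univ.exists_ne_map_eq_of_mapsTo
        (f := c) (t := Set.Iic r.den) (fun k _ => hc k) (Set.finite_Iic _)
      rcases lt_or_gt_of_ne hne with h | h
      · exact ⟨k, l, h, he⟩
      · exact ⟨l, k, h, he.symm⟩
    have heq : tl b s k = tl b s l := by
      have h1 := hc' k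
      rw [hv, ← hc' l] at h1
      exact mul_left_cancel₀ hd.ne' h1
    have hst : ∀ i j, tl b s i = tl b s j → s i = s j ∧ tl b s (i + 1) = tl b s (j + 1) := by
      intro i j e
      have h1 := tl_succ hb hdig i
      have h2 := tl_succ hb hdig j
      rw [e] at h1
      have a1 := hlt (i + 1)
      have a2 := hlt (j + 1)
      have a3 := tl_nonneg (b := b) (s := s) (i + 1)
      have a4 := tl_nonneg (b := b) (s := s) (j + 1)
      have b1 : (s i : ℝ) < s j + 1 := by linarith
      have b2 : (s j : ℝ) < s i + 1 := by linarith
      have b1' : s i < s j + 1 := by exact_mod_cast b1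
      have b2' : s j < s i + 1 := by exact_mod_cast b2
      have e' : s i = s j := by omega
      rw [e'] at h1
      exact ⟨e', by linarith⟩
    have hall : ∀ i, tl b s (k + i) = tl b s (l + i) := by
      intro i
      induction i with
      | zero => exact heq
      | succ i ih => exact (hst _ _ ih).2
    exact ⟨k, l, hkl, fun i => (hst _ _ (hall i)).1⟩

theorem irrational_tl (hb : 2 ≤ b) (hdig : ∀ k, s k < b) {k₀ n₀ : ℕ}
    (hs : ∀ n ≥ n₀, pc n s = n + k₀) : Irrational (tl b s 0) := by
  by_contra h
  obtain ⟨k, l, hkl, hp⟩ := periodic_of_rational hb hdig h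
  have hle : ∀ n, pc n s ≤ l := by
    intro n
    refine pc_le_of_rep fun q => ?_
    induction q using Nat.strong_induction_on with
    | _ q ih =>
      rcases Nat.lt_or_ge q l with hq | hq
      · exact ⟨q, hq, E.refl n q⟩
      · obtain ⟨r, hr, e⟩ := ih (q - (l - k)) (by omega)
        refine ⟨r, hr, E.trans (fun t _ => ?_) e⟩
        have := hp (q - l + t)
        rw [show q + t = l + (q - l + t) by omega, ← this]
        congr 1
        omega
  have := hle (n₀ + l + 1)
  rw [hs _ (by omega)] at this
  omega

end Expansion

/-- Very good approximations to an irrational number that are arbitrarily close to it are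
infinite in number. -/
theorem le_irrExp {ξ θ : ℝ} (hξ : Irrational ξ) (hθ : 1 < θ)
    (h : ∀ μ, 1 < μ → μ < θ → ∀ ε > 0, ∃ q : ℚ, |ξ - q| < 1 / (q.den : ℝ) ^ μ ∧ |ξ - q| < ε) :
    (θ : EReal) ≤ irrExp ξ := by
  by_contra! hc
  obtain ⟨z, hz1, hz2⟩ := EReal.lt_iff_exists_real_btwn.mp hc
  have hz2' : z < θ := by exact_mod_cast hz2
  obtain ⟨μ, hm1, hm2⟩ := exists_between (max_lt hθ hz2')
  have hinf : {q : ℚ | |ξ - (q : ℝ)| < 1 / (q.den : ℝ) ^ μ}.Infinite := by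
    intro hfin
    have hk := h μ (lt_of_le_of_lt (le_max_left _ _) hm1) hm2
    obtain ⟨q₀, hq₀, -⟩ := hk 1 one_pos
    obtain ⟨q, -, hmin⟩ := Set.exists_min_image _ (fun q : ℚ => |ξ - (q : ℝ)|) hfin ⟨q₀, hq₀⟩
    have hpos : 0 < |ξ - (q : ℝ)| := abs_pos.mpr (sub_ne_zero.mpr (hξ.ne_rat q))
    obtain ⟨q', h1, h2⟩ := hk _ hpos
    exact absurd (hmin q' h1) (not_le.mpr h2)
  have hle : (μ : EReal) ≤ irrExp ξ := le_sSup ⟨μ, hinf, rfl⟩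
  have : (z : EReal) < μ := by exact_mod_cast lt_of_le_of_lt (le_max_right _ _) hm1
  exact absurd (hle.trans_lt hz1) (not_lt.mpr this.le)

theorem irrExp_ge_of_pc {b : ℕ} (hb : 2 ≤ b) {s : ℕ → ℕ} (hdig : ∀ k, s k < b) {k₀ n₀ : ℕ}
    (hs : ∀ n ≥ n₀, pc n s = n + k₀) :
    ((5 / 3 + 4 * √10 / 15 : ℝ) : EReal) ≤ irrExp (tl b s 0) := by
  have hb1 : (1 : ℝ) < b := by exact_mod_cast hb
  obtain ⟨N, k, n₁, hpc, hrec⟩ := exists_recurrent b s hdig k₀ n₀ hs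
  obtain ⟨L, J, M, D⟩ := exists_levels hpc hrec
  refine le_irrExp (irrational_tl hb hdig hs)
    (by have := Real.sqrt_nonneg 10; linarith) fun μ h1 h2 ε hε => ?_
  obtain ⟨lam, hl1, hl2⟩ := exists_between (show μ - 1 < 2 / 3 + 4 * √10 / 15 by linarith)
  obtain ⟨i₁, hi₁⟩ := exists_nat_gt ((μ - 1) * (N + k + 1) / (lam - (μ - 1)))
  rw [div_lt_iff₀ (by linarith)] at hi₁
  obtain ⟨i₂, hi₂⟩ := exists_pow_lt_of_lt_one hε (inv_lt_one_of_one_lt₀ hb1)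
  obtain ⟨i, hi, hfast⟩ := D.fast hl2 (i₁ + i₂)
  have hLi : i ≤ L i := D.mono.le_apply
  have hLi' : (i₁ : ℝ) ≤ L i := by exact_mod_cast (show i₁ ≤ L i by omega)
  have e : E s (L (i + 1)) (N + J (i + 1)) (N + M (i + 1)) := by
    intro t ht
    have := (D.fr (i + 1)).rep t ht
    simpa [add_assoc] using this
  have hlt := (D.fr (i + 1)).lt
  obtain ⟨q, hq1, hq2⟩ := exists_approx hb hdig (by omega) e h1 (by
    rw [D.Ms i]
    push_cast
    have := mul_le_mul_of_nonneg_left hLi' (show 0 ≤ lam - (μ - 1) by linarith)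
    linarith)
  refine ⟨q, hq1, hq2.trans_lt ?_⟩
  refine lt_of_le_of_lt ?_ hi₂
  rw [inv_pow, ← one_div]
  apply one_div_le_one_div_of_le (by positivity)
  have hL1 := D.L_lt i
  exact pow_le_pow_right₀ hb1.le (by omega)

theorem irrExp_sturmian_number_ge (b : ℕ) (hb : 2 ≤ b) (s : ℕ → ℕ) (hdig : ∀ k, s k < b)
    (hs : IsSturmian s ∨ IsQuasiSturmian s) :
    ((5 / 3 + 4 * Real.sqrt 10 / 15 : ℝ) : EReal) ≤
      irrExp (∑' k : ℕ, (s k : ℝ) / (b : ℝ) ^ (k + 1)) := by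
  have key : ∃ k₀ n₀, ∀ n ≥ n₀, pc n s = n + k₀ := by
    rcases hs with h | ⟨k, -, n₀, h⟩
    · exact ⟨1, 1, h⟩
    · exact ⟨k, n₀, h⟩
  obtain ⟨k₀, n₀, h⟩ := key
  have := irrExp_ge_of_pc hb hdig h
  simpa only [tl, zero_add] using this
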